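/- arXiv:1601.04224 — 2 statements merged into one kernel-verified Lean document; each statement's English description precedes it below -/
import Mathlib

section
/- Let φ:[0,1]→ℝ² be absolutely continuous with ∫₀¹ Λ*(φ'(t)) dt < ∞. Then ‖φ'(t)‖ < R for almost every t ∈ [0,1]; consequently ‖φ(s)−φ(t)‖ ≤ R|s−t| for all s,t ∈ [0,1], and L(φ|_{[a,b]}) < R(b−a) for every 0 ≤ a < b ≤ 1. -/
open MeasureTheory Set Filter Topology
open scoped ENNReal RealInnerProductSpace

noncomputable section

/-- The Euclidean plane. -/
abbrev E2 := EuclideanSpace ℝ (Fin 2)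

/-- The uniform probability measure on a set `A` (normalized Lebesgue measure). -/
def uniformOn {α : Type*} [MeasureSpace α] (A : Set α) : Measure α :=
  (volume A)⁻¹ • volume.restrict A

/-- The logarithmic moment generating function `Λ` of the uniform probability measure on the
open disk of radius `R` centered at the origin. -/
def logMGF (R : ℝ) (η : E2) : ℝ :=
  Real.log (∫ x, Real.exp (⟪x, η⟫) ∂(uniformOn (Metric.ball (0 : E2) R)))

/-- The Fenchel–Legendre transform `Λ*` of `logMGF R`, valued in `[0,∞]`.  Since the supremum
includes `η = 0` (where the value is `0`), truncating negative values does not change it. -/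
def lambdaStar (R : ℝ) (y : E2) : ℝ≥0∞ :=
  ⨆ η : E2, ENNReal.ofReal (⟪y, η⟫ - logMGF R η)

/-!
If `μ` puts full mass on the open half-space `{x | ⟪x, u⟫ < ⟪y, u⟫}`, then
`s ⟪y, u⟫ - log ∫ exp (s ⟪x, u⟫) dμ = -log ∫ exp (s (⟪x, u⟫ - ⟪y, u⟫)) dμ → ∞` as `s → ∞` by
dominated convergence, so the Legendre transform of the log-Laplace transform of `μ` is infinite
at `y`. For `μ` carried by the open ball of radius `R`, the choice `u = y` applies to every `y`
with `R ≤ ‖y‖`. A path of finite rate therefore has speed `< R` almost everywhere, and the length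
bound stays strict because an a.e. strict inequality integrates to a strict one.
-/

section CumulantGeneratingFunction

open ProbabilityTheory (cgf mgf)

variable {Ω : Type*} [MeasurableSpace Ω] {μ : Measure Ω} {X : Ω → ℝ}

lemma cgf_add_const_of_integrable [NeZero μ] {s : ℝ}
    (hX : Integrable (fun ω => Real.exp (s * X ω)) μ) (c : ℝ) :
    cgf (fun ω => X ω + c) μ s = cgf X μ s + s * c := by
  rw [cgf, ProbabilityTheory.mgf_add_const, Real.log_mul
    (ProbabilityTheory.mgf_pos' (NeZero.ne μ) hX).ne' (Real.exp_ne_zero _), Real.log_exp, cgf]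

variable [IsFiniteMeasure μ]

lemma tendsto_mgf_atTop_zero_of_ae_neg (hX : AEMeasurable X μ) (hneg : ∀ᵐ ω ∂μ, X ω < 0) :
    Tendsto (mgf X μ) atTop (𝓝 0) := by
  have hbound (s : ℝ) (hs : 0 ≤ s) : ∀ᵐ ω ∂μ, ‖Real.exp (s * X ω)‖ ≤ 1 := by
    filter_upwards [hneg] with ω hω
    rw [Real.norm_eq_abs, Real.abs_exp, Real.exp_le_one_iff]
    exact mul_nonpos_of_nonneg_of_nonpos hs hω.le
  have hpointwise : ∀ᵐ ω ∂μ, Tendsto (fun s : ℝ => Real.exp (s * X ω)) atTop (𝓝 0) := by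
    filter_upwards [hneg] with ω hω
    exact Real.tendsto_exp_atBot.comp (tendsto_id.atTop_mul_const_of_neg hω)
  rw [← integral_zero Ω ℝ (μ := μ)]
  exact tendsto_integral_filter_of_dominated_convergence (fun _ => 1)
    (.of_forall fun s => (hX.const_mul s).exp.aestronglyMeasurable)
    ((eventually_ge_atTop 0).mono hbound) (integrable_const 1) hpointwise

variable [NeZero μ]

lemma tendsto_cgf_atTop_atBot_of_ae_neg (hX : AEMeasurable X μ) (hneg : ∀ᵐ ω ∂μ, X ω < 0) :
    Tendsto (cgf X μ) atTop atBot := by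
  have hpos (s : ℝ) (hs : 0 ≤ s) : 0 < mgf X μ s :=
    ProbabilityTheory.mgf_pos' (NeZero.ne μ) <|
      ProbabilityTheory.integrable_exp_mul_of_le s 0 hs hX (hneg.mono fun _ => le_of_lt)
  exact Real.tendsto_log_nhdsGT_zero.comp <| tendsto_nhdsWithin_iff.2
    ⟨tendsto_mgf_atTop_zero_of_ae_neg hX hneg, (eventually_ge_atTop 0).mono hpos⟩

lemma tendsto_mul_sub_cgf_atTop_of_ae_lt {c : ℝ} (hX : AEMeasurable X μ)
    (hlt : ∀ᵐ ω ∂μ, X ω < c) : Tendsto (fun s => s * c - cgf X μ s) atTop atTop := by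
  have hshift : Tendsto (cgf (fun ω => X ω + -c) μ) atTop atBot :=
    tendsto_cgf_atTop_atBot_of_ae_neg (hX.add_const _)
      (hlt.mono fun _ h => by linarith)
  refine (tendsto_neg_atBot_atTop.comp hshift).congr' ?_
  filter_upwards [eventually_ge_atTop 0] with s hs
  have hint : Integrable (fun ω => Real.exp (s * X ω)) μ :=
    ProbabilityTheory.integrable_exp_mul_of_le s c hs hX (hlt.mono fun _ => le_of_lt)
  rw [Function.comp_apply, cgf_add_const_of_integrable hint]
  ring

end CumulantGeneratingFunction

section CramerTransform

open ProbabilityTheory (cgf)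

variable {E : Type*} [NormedAddCommGroup E] [InnerProductSpace ℝ E] [MeasurableSpace E]

/-- The Cramér transform of a measure `μ`: the Legendre transform of its log-Laplace transform,
which at `η` is the value at `1` of the cumulant generating function of `⟪·, η⟫`. Taking values in
`[0, ∞]` loses nothing for a probability measure, where `η = 0` contributes `0` to the supremum. -/
def cramerTransform (μ : Measure E) (y : E) : ℝ≥0∞ :=
  ⨆ η : E, ENNReal.ofReal (⟪y, η⟫ - cgf (fun x => ⟪x, η⟫) μ 1)

lemma lowerSemicontinuous_cramerTransform (μ : Measure E) :
    LowerSemicontinuous (cramerTransform μ) :=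
  lowerSemicontinuous_iSup fun _ =>
    (ENNReal.continuous_ofReal.comp (by fun_prop)).lowerSemicontinuous

lemma ofReal_mul_sub_cgf_le_cramerTransform (μ : Measure E) (y u : E) (s : ℝ) :
    ENNReal.ofReal (s * ⟪y, u⟫ - cgf (fun x => ⟪x, u⟫) μ s) ≤ cramerTransform μ y := by
  refine le_of_eq_of_le ?_ (le_iSup _ (s • u))
  simp only [cgf, ProbabilityTheory.mgf, real_inner_smul_right, one_mul]

variable [OpensMeasurableSpace E] {μ : Measure E} [IsFiniteMeasure μ] [NeZero μ]

lemma cramerTransform_eq_top_of_ae_inner_lt {y u : E} (h : ∀ᵐ x ∂μ, ⟪x, u⟫ < ⟪y, u⟫) :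
    cramerTransform μ y = ⊤ := by
  have hmeas : AEMeasurable (fun x : E => ⟪x, u⟫) μ :=
    (by fun_prop : Continuous fun x : E => ⟪x, u⟫).aemeasurable
  exact top_le_iff.1 <| le_of_tendsto'
    (ENNReal.tendsto_ofReal_atTop.comp (tendsto_mul_sub_cgf_atTop_of_ae_lt hmeas h))
    (ofReal_mul_sub_cgf_le_cramerTransform μ y u)

variable {R : ℝ} (hμ : ∀ᵐ x ∂μ, ‖x‖ < R)
include hμ

lemma norm_lt_of_cramerTransform_lt_top {y : E} (hy : cramerTransform μ y < ⊤) : ‖y‖ < R := by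
  by_contra! hR
  refine hy.ne (cramerTransform_eq_top_of_ae_inner_lt (u := y) ?_)
  filter_upwards [hμ] with x hx
  have hxy : ‖x‖ < ‖y‖ := hx.trans_le hR
  calc ⟪x, y⟫ ≤ ‖x‖ * ‖y‖ := real_inner_le_norm x y
    _ < ‖y‖ * ‖y‖ := mul_lt_mul_of_pos_right hxy ((norm_nonneg x).trans_lt hxy)
    _ = ⟪y, y⟫ := (real_inner_self_eq_norm_mul_norm y).symm

lemma ae_norm_lt_of_lintegral_cramerTransform_lt_top {α : Type*} [MeasurableSpace α]
    {ν : Measure α} {g : α → E} (hg : AEMeasurable g ν)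
    (hrate : ∫⁻ t, cramerTransform μ (g t) ∂ν < ⊤) : ∀ᵐ t ∂ν, ‖g t‖ < R := by
  have hmeas : AEMeasurable (fun t => cramerTransform μ (g t)) ν :=
    (lowerSemicontinuous_cramerTransform μ).measurable.comp_aemeasurable hg
  exact (ae_lt_top' hmeas hrate.ne).mono fun t => norm_lt_of_cramerTransform_lt_top hμ

end CramerTransform

lemma lintegral_lt_mul_measure_univ_of_ae_lt {α : Type*} [MeasurableSpace α] {ν : Measure α}
    [IsFiniteMeasure ν] [NeZero ν] {f : α → ℝ≥0∞} {c : ℝ≥0∞} (hc : c ≠ ⊤)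
    (h : ∀ᵐ x ∂ν, f x < c) : ∫⁻ x, f x ∂ν < c * ν univ := by
  have hle : ∫⁻ x, f x ∂ν ≤ c * ν univ :=
    (lintegral_mono_ae (h.mono fun _ => le_of_lt)).trans_eq (lintegral_const c)
  have hfin : ∫⁻ x, f x ∂ν ≠ ⊤ := ne_top_of_le_ne_top (ENNReal.mul_ne_top hc (by finiteness)) hle
  simpa only [lintegral_const] using
    lintegral_strict_mono (NeZero.ne ν) aemeasurable_const hfin h

section Primitive

variable {E : Type*} [NormedAddCommGroup E] [NormedSpace ℝ E] {f f' : ℝ → E} {a b : ℝ}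

lemma sub_eq_intervalIntegral_of_eq_add_intervalIntegral (hf' : IntegrableOn f' (Icc a b))
    (h : ∀ t ∈ Icc a b, f t = f a + ∫ r in a..t, f' r) {s t : ℝ} (hs : s ∈ Icc a b)
    (ht : t ∈ Icc a b) : f t - f s = ∫ r in s..t, f' r := by
  have hint (x : ℝ) (hx : x ∈ Icc a b) : IntervalIntegrable f' volume a x :=
    (hf'.mono_set (uIcc_subset_Icc (left_mem_Icc.2 (hx.1.trans hx.2)) hx)).intervalIntegrable
  rw [h s hs, h t ht, add_sub_add_left_eq_sub,
    intervalIntegral.integral_interval_sub_left (hint t ht) (hint s hs)]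

lemma eVariationOn_le_lintegral_enorm
    (h : ∀ s ∈ Icc a b, ∀ t ∈ Icc a b, f t - f s = ∫ r in s..t, f' r) :
    eVariationOn f (Icc a b) ≤ ∫⁻ r in Ioc a b, ‖f' r‖ₑ := by
  refine iSup_le fun ⟨n, u, hu, hmem⟩ => ?_
  calc ∑ i ∈ Finset.range n, edist (f (u (i + 1))) (f (u i))
      ≤ ∑ i ∈ Finset.range n, ∫⁻ r in Ioc (u i) (u (i + 1)), ‖f' r‖ₑ := by
        refine Finset.sum_le_sum fun i _ => ?_
        rw [edist_eq_enorm_sub, h _ (hmem i) _ (hmem (i + 1)),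
          intervalIntegral.integral_of_le (hu i.le_succ)]
        exact enorm_integral_le_lintegral_enorm _
    _ = ∫⁻ r in ⋃ i ∈ Finset.range n, Ioc (u i) (u (i + 1)), ‖f' r‖ₑ :=
        (lintegral_biUnion_finset (hu.pairwise_disjoint_on_Ioc_succ.set_pairwise _)
          (fun _ _ => measurableSet_Ioc) _).symm
    _ ≤ ∫⁻ r in Ioc a b, ‖f' r‖ₑ :=
        lintegral_mono_set (iUnion₂_subset fun i _ => Ioc_subset_Ioc (hmem i).1 (hmem (i + 1)).2)

lemma norm_sub_le_mul_abs_sub_of_ae_norm_le {K : ℝ}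
    (h : ∀ s ∈ Icc a b, ∀ t ∈ Icc a b, f t - f s = ∫ r in s..t, f' r)
    (hK : ∀ᵐ r ∂volume.restrict (Icc a b), ‖f' r‖ ≤ K) {s t : ℝ} (hs : s ∈ Icc a b)
    (ht : t ∈ Icc a b) : ‖f s - f t‖ ≤ K * |s - t| := by
  rw [h t ht s hs]
  refine intervalIntegral.norm_integral_le_of_norm_le_const_ae ?_
  filter_upwards [(ae_restrict_iff' measurableSet_Icc).1 hK] with r hr hmem
  exact hr (uIcc_subset_Icc ht hs (uIoc_subset_uIcc hmem))

lemma eVariationOn_lt_of_ae_norm_lt {K : ℝ} (hab : a < b)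
    (h : ∀ s ∈ Icc a b, ∀ t ∈ Icc a b, f t - f s = ∫ r in s..t, f' r)
    (hK : ∀ᵐ r ∂volume.restrict (Icc a b), ‖f' r‖ < K) :
    eVariationOn f (Icc a b) < ENNReal.ofReal (K * (b - a)) := by
  have : NeZero (volume.restrict (Ioc a b)) := ⟨by simp [Measure.restrict_eq_zero, hab]⟩
  have hspeed : ∀ᵐ r ∂volume.restrict (Ioc a b), ‖f' r‖ₑ < ENNReal.ofReal K := by
    filter_upwards [ae_restrict_of_ae_restrict_of_subset Ioc_subset_Icc_self hK] with r hr
    rw [← ofReal_norm]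
    exact (ENNReal.ofReal_lt_ofReal_iff ((norm_nonneg _).trans_lt hr)).2 hr
  calc eVariationOn f (Icc a b) ≤ ∫⁻ r in Ioc a b, ‖f' r‖ₑ := eVariationOn_le_lintegral_enorm h
    _ < ENNReal.ofReal K * volume.restrict (Ioc a b) univ :=
        lintegral_lt_mul_measure_univ_of_ae_lt ENNReal.ofReal_ne_top hspeed
    _ = ENNReal.ofReal (K * (b - a)) := by
        rw [Measure.restrict_apply_univ, Real.volume_Ioc, ENNReal.ofReal_mul' (sub_nonneg.2 hab.le)]

end Primitive

lemma isProbabilityMeasure_uniformOn {α : Type*} [MeasureSpace α] {A : Set α}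
    (h0 : volume A ≠ 0) (htop : volume A ≠ ⊤) : IsProbabilityMeasure (uniformOn A) :=
  ProbabilityTheory.cond_isProbabilityMeasure_of_finite h0 htop

lemma ae_mem_uniformOn {α : Type*} [MeasureSpace α] {A : Set α} (hA : MeasurableSet A) :
    ∀ᵐ x ∂uniformOn A, x ∈ A :=
  ProbabilityTheory.ae_cond_mem hA

lemma lambdaStar_eq_cramerTransform (R : ℝ) :
    lambdaStar R = cramerTransform (uniformOn (Metric.ball (0 : E2) R)) := by
  funext y
  simp only [lambdaStar, logMGF, cramerTransform, ProbabilityTheory.cgf,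
    ProbabilityTheory.mgf, one_mul]

theorem statement11_general {E : Type*} [NormedAddCommGroup E] [InnerProductSpace ℝ E]
    [CompleteSpace E] [MeasurableSpace E] [BorelSpace E] {μ : Measure E} [IsFiniteMeasure μ]
    [NeZero μ] {R : ℝ} (hμ : ∀ᵐ x ∂μ, ‖x‖ < R) {φ g : ℝ → E} {a b : ℝ}
    (hg : AEStronglyMeasurable g (volume.restrict (Icc a b)))
    (hφ : ∀ t ∈ Icc a b, φ t = φ a + ∫ s in a..t, g s)
    (hrate : ∫⁻ t in Icc a b, cramerTransform μ (g t) < ⊤) :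
    (∀ᵐ t ∂volume.restrict (Icc a b), ‖g t‖ < R) ∧
    (∀ s ∈ Icc a b, ∀ t ∈ Icc a b, ‖φ s - φ t‖ ≤ R * |s - t|) ∧
    (∀ c d : ℝ, a ≤ c → c < d → d ≤ b →
      eVariationOn φ (Icc c d) < ENNReal.ofReal (R * (d - c))) := by
  have hspeed : ∀ᵐ t ∂volume.restrict (Icc a b), ‖g t‖ < R :=
    ae_norm_lt_of_lintegral_cramerTransform_lt_top hμ hg.aemeasurable hrate
  have hspeed_le : ∀ᵐ t ∂volume.restrict (Icc a b), ‖g t‖ ≤ R := hspeed.mono fun _ => le_of_lt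
  have hprim : ∀ s ∈ Icc a b, ∀ t ∈ Icc a b, φ t - φ s = ∫ r in s..t, g r := fun s hs t ht =>
    sub_eq_intervalIntegral_of_eq_add_intervalIntegral (Integrable.of_bound hg R hspeed_le) hφ hs ht
  refine ⟨hspeed, fun s hs t ht => norm_sub_le_mul_abs_sub_of_ae_norm_le hprim hspeed_le hs ht,
    fun c d hac hcd hdb => ?_⟩
  have hsub : Icc c d ⊆ Icc a b := Icc_subset_Icc hac hdb
  exact eVariationOn_lt_of_ae_norm_lt hcd (fun s hs t ht => hprim s (hsub hs) t (hsub ht))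
    (ae_restrict_of_ae_restrict_of_subset hsub hspeed)

/-- If `φ` is absolutely continuous with derivative `g` and finite rate
`∫₀¹ Λ*(g(t)) dt < ∞`, then `‖g(t)‖ < R` a.e. on `[0,1]`; consequently `φ` is `R`-Lipschitz
on `[0,1]` and `L(φ|_{[a,b]}) < R(b−a)` for all `0 ≤ a < b ≤ 1`. -/
theorem statement11 (R : ℝ) (hR : 0 < R) (φ g : ℝ → E2)
    (hint : IntegrableOn g (Set.Icc 0 1) volume)
    (hAC : ∀ t ∈ Set.Icc (0:ℝ) 1, φ t = φ 0 + ∫ s in (0:ℝ)..t, g s)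
    (hfin : (∫⁻ t in Set.Icc (0:ℝ) 1, lambdaStar R (g t)) < ⊤) :
    (∀ᵐ t ∂(volume.restrict (Set.Icc (0:ℝ) 1)), ‖g t‖ < R) ∧
    (∀ s ∈ Set.Icc (0:ℝ) 1, ∀ t ∈ Set.Icc (0:ℝ) 1, ‖φ s - φ t‖ ≤ R * |s - t|) ∧
    (∀ a b : ℝ, 0 ≤ a → a < b → b ≤ 1 →
      eVariationOn φ (Set.Icc a b) < ENNReal.ofReal (R * (b - a))) := by
  have := isProbabilityMeasure_uniformOn (Metric.measure_ball_pos volume (0 : E2) hR).ne'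
    measure_ball_lt_top.ne
  have hball : ∀ᵐ x ∂uniformOn (Metric.ball (0 : E2) R), ‖x‖ < R :=
    (ae_mem_uniformOn Metric.isOpen_ball.measurableSet).mono fun _ => mem_ball_zero_iff.1
  rw [lambdaStar_eq_cramerTransform] at hfin
  exact statement11_general hball hint.aestronglyMeasurable hAC hfin
end
end

section
/- Let φ:[0,1]→ℝ² be absolutely continuous with ∫₀¹ Λ*(φ'(t)) dt < ∞, and let w ∈ ℝ² be any vector with ‖w‖ = L(φ). Then ∫₀¹ Λ*(φ'(t)) dt ≥ Λ*(w), with equality if and only if φ has constant speed, i.e. ‖φ'(t)‖ = L(φ) for almost every t ∈ [0,1]. -/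
open MeasureTheory Set Filter Topology
open scoped ENNReal RealInnerProductSpace

noncomputable section

/-!
The length of `φ` is `∫₀¹ ‖φ'‖`: along an absolutely continuous path the increments of `φ` are
bounded by those of `∫ ‖φ'‖`, while the variation function `V` of `φ` is monotone with
`‖φ'‖ ≤ V'` almost everywhere. Since the law `μ` is isotropic, `Λ*(y) = h*(‖y‖)`, where `h` is the
cumulant generating function of a one-dimensional marginal of `μ`. The claim is therefore Jensen's
inequality for `h*` and the speed `‖φ'‖`, whose mean is `m = L(φ) = ‖w‖`.

For the equality case, finiteness forces `m < R`, so the supremum defining `h*(m)` is attained, say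
at `s`. The affine minorant `r ↦ r s - h(s)` of `h*` touches it at `m`; equality in Jensen's
inequality makes it touch `h*` at almost every speed `‖φ'(t)‖`, that is, `‖φ'(t)‖` is a subgradient
of `h` at `s`. As `h` is differentiable, its only subgradient at `s` is `h'(s) = m`.
-/

section PathLength

variable {E : Type*} [NormedAddCommGroup E] {f φ g : ℝ → E} {F : ℝ → ℝ} {a b x : ℝ}

theorem eVariationOn_Icc_le_ofReal_sub (hab : a ≤ b)
    (h : ∀ x ∈ Icc a b, ∀ y ∈ Icc a b, x ≤ y → ‖f y - f x‖ ≤ F y - F x) :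
    eVariationOn f (Icc a b) ≤ ENNReal.ofReal (F b - F a) := by
  have hF : MonotoneOn F (Icc a b) := fun x hx y hy hxy ↦
    sub_nonneg.1 ((norm_nonneg _).trans (h x hx y hy hxy))
  calc eVariationOn f (Icc a b)
      ≤ eVariationOn F (Icc a b) := by
        refine iSup_le fun p ↦ le_iSup_of_le p (Finset.sum_le_sum fun i _ ↦ ?_)
        rw [edist_dist, edist_dist, dist_eq_norm, dist_eq_norm]
        exact ENNReal.ofReal_le_ofReal ((h _ (p.2.2.2 i) _ (p.2.2.2 (i + 1))
          (p.2.2.1 i.le_succ)).trans (le_abs_self _))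
    _ = ENNReal.ofReal (F b - F a) := by
        simpa using hF.eVariationOn_eq (left_mem_Icc.2 hab) (right_mem_Icc.2 hab)

theorem norm_sub_le_variationOnFromTo_sub {s : Set ℝ} (hf : LocallyBoundedVariationOn f s)
    (ha : a ∈ s) {x y : ℝ} (hx : x ∈ s) (hy : y ∈ s) (hxy : x ≤ y) :
    ‖f y - f x‖ ≤ variationOnFromTo f s a y - variationOnFromTo f s a x := by
  rw [variationOnFromTo.sub_right hf ha hy hx, variationOnFromTo.eq_of_le _ _ hxy, ← dist_eq_norm,
    dist_edist]
  exact ENNReal.toReal_mono (hf x y hx hy)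
    (eVariationOn.edist_le _ ⟨hy, right_mem_Icc.2 hxy⟩ ⟨hx, left_mem_Icc.2 hxy⟩)

variable [NormedSpace ℝ E]

theorem norm_le_of_hasDerivAt_of_norm_sub_le {f' : E} {F' : ℝ} (hf : HasDerivAt f f' x)
    (hF : HasDerivAt F F' x) (h : ∀ᶠ y in 𝓝[>] x, ‖f y - f x‖ ≤ F y - F x) : ‖f'‖ ≤ F' := by
  have hright : 𝓝[>] x ≤ 𝓝[≠] x := nhdsWithin_mono x fun _ hy ↦ ne_of_gt hy
  refine le_of_tendsto_of_tendsto (hf.tendsto_slope.mono_left hright).norm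
    (hF.tendsto_slope.mono_left hright) ?_
  filter_upwards [h, self_mem_nhdsWithin] with y hy hxy
  rw [slope_def_module, slope_def_module, norm_smul, smul_eq_mul,
    Real.norm_of_nonneg (inv_nonneg.2 (sub_nonneg.2 (le_of_lt hxy)))]
  exact mul_le_mul_of_nonneg_left hy (inv_nonneg.2 (sub_nonneg.2 (le_of_lt hxy)))

theorem integral_norm_le_toReal_eVariationOn (hab : a ≤ b) (hf : BoundedVariationOn f (Icc a b))
    (hg : IntervalIntegrable g volume a b)
    (hfg : ∀ᵐ x ∂volume.restrict (Icc a b), HasDerivAt f (g x) x) :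
    ∫ x in a..b, ‖g x‖ ≤ (eVariationOn f (Icc a b)).toReal := by
  set V : ℝ → ℝ := variationOnFromTo f (Icc a b) a with hV
  have ha : a ∈ Icc a b := left_mem_Icc.2 hab
  have hVmono : MonotoneOn V (Icc a b) :=
    variationOnFromTo.monotoneOn hf.locallyBoundedVariationOn ha
  have hVmono' : MonotoneOn V (uIcc a b) := by rwa [uIcc_of_le hab]
  have hderiv : ∀ᵐ x ∂volume.restrict (Icc a b), ‖g x‖ ≤ deriv V x := by
    rw [← restrict_Ioo_eq_restrict_Icc] at hfg ⊢
    filter_upwards [hfg, ae_restrict_of_ae hVmono.ae_differentiableWithinAt_of_mem,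
      ae_restrict_mem measurableSet_Ioo] with x hfx hVx hx
    have hxI := Ioo_subset_Icc_self hx
    have hnhds : Icc a b ∈ 𝓝 x := Icc_mem_nhds hx.1 hx.2
    refine norm_le_of_hasDerivAt_of_norm_sub_le hfx
      ((hVx hxI).differentiableAt hnhds).hasDerivAt ?_
    filter_upwards [nhdsWithin_le_nhds hnhds, self_mem_nhdsWithin] with y hy hxy
    exact norm_sub_le_variationOnFromTo_sub hf.locallyBoundedVariationOn ha hxI hy (le_of_lt hxy)
  calc ∫ x in a..b, ‖g x‖
      ≤ ∫ x in a..b, deriv V x :=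
        intervalIntegral.integral_mono_ae_restrict hab hg.norm hVmono'.intervalIntegrable_deriv
          hderiv
    _ ≤ V b - V a := by
        have h := hVmono'.intervalIntegral_deriv_mem_uIcc
        rw [uIcc_of_le (sub_nonneg.2 (hVmono ha (right_mem_Icc.2 hab) hab))] at h
        exact h.2
    _ = (eVariationOn f (Icc a b)).toReal := by
        rw [hV, variationOnFromTo.self, sub_zero, variationOnFromTo.eq_of_le _ _ hab, inter_self]

theorem norm_sub_le_integral_norm_of_eq_integral (hg : IntervalIntegrable g volume a b)
    (hφ : ∀ t ∈ Icc a b, φ t = φ a + ∫ s in a..t, g s) {x y : ℝ}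
    (hx : x ∈ Icc a b) (hy : y ∈ Icc a b) (hxy : x ≤ y) :
    ‖φ y - φ x‖ ≤ (∫ s in a..y, ‖g s‖) - ∫ s in a..x, ‖g s‖ := by
  have hab : a ≤ b := hx.1.trans hx.2
  have hi {t : ℝ} (ht : t ∈ Icc a b) : IntervalIntegrable g volume a t :=
    hg.mono_set (by rw [uIcc_of_le hab, uIcc_of_le ht.1]; exact Icc_subset_Icc_right ht.2)
  rw [hφ y hy, hφ x hx, add_sub_add_left_eq_sub,
    intervalIntegral.integral_interval_sub_left (hi hy) (hi hx),
    intervalIntegral.integral_interval_sub_left (hi hy).norm (hi hx).norm]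
  exact intervalIntegral.norm_integral_le_integral_norm hxy

theorem ae_hasDerivAt_of_eq_integral [CompleteSpace E] (hab : a ≤ b)
    (hg : IntervalIntegrable g volume a b)
    (hφ : ∀ t ∈ Icc a b, φ t = φ a + ∫ s in a..t, g s) :
    ∀ᵐ x ∂volume.restrict (Icc a b), HasDerivAt φ (g x) x := by
  rw [← restrict_Ioo_eq_restrict_Icc]
  filter_upwards [ae_restrict_of_ae hg.ae_hasDerivAt_integral,
    ae_restrict_mem measurableSet_Ioo] with x hgx hx
  have hxI : x ∈ uIcc a b := by rw [uIcc_of_le hab]; exact Ioo_subset_Icc_self hx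
  refine ((hgx hxI a left_mem_uIcc).const_add (φ a)).congr_of_eventuallyEq ?_
  filter_upwards [Icc_mem_nhds hx.1 hx.2] with t ht using hφ t ht

theorem toReal_eVariationOn_eq_integral_norm [CompleteSpace E] (hab : a ≤ b)
    (hg : IntervalIntegrable g volume a b)
    (hφ : ∀ t ∈ Icc a b, φ t = φ a + ∫ s in a..t, g s) :
    (eVariationOn φ (Icc a b)).toReal = ∫ s in a..b, ‖g s‖ := by
  have hle : eVariationOn φ (Icc a b) ≤ ENNReal.ofReal (∫ s in a..b, ‖g s‖) := by
    simpa using eVariationOn_Icc_le_ofReal_sub hab fun x hx y hy hxy ↦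
      norm_sub_le_integral_norm_of_eq_integral hg hφ hx hy hxy
  refine le_antisymm (ENNReal.toReal_le_of_le_ofReal
    (intervalIntegral.integral_nonneg hab fun _ _ ↦ norm_nonneg _) hle) ?_
  exact integral_norm_le_toReal_eVariationOn hab (hle.trans_lt ENNReal.ofReal_lt_top).ne hg
    (ae_hasDerivAt_of_eq_integral hab hg hφ)

end PathLength

section FenchelConjugate

variable {E : Type*} [NormedAddCommGroup E] [InnerProductSpace ℝ E] {f : E → ℝ} {y η : E}

/-- The Fenchel–Legendre conjugate `f*` of `f`, truncated below at `0` so as to take values in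
`[0,∞]`; the truncation changes nothing when `f 0 ≤ 0`. -/
def fenchelConjugate (f : E → ℝ) (y : E) : ℝ≥0∞ :=
  ⨆ η, ENNReal.ofReal (⟪y, η⟫ - f η)

/-- `y` is a subgradient of `f` at `η`, expressed by saying that `η` attains the supremum
defining the conjugate of `f` at `y`. -/
def IsSubgradientAt (f : E → ℝ) (y η : E) : Prop :=
  ∀ ξ, ⟪y, ξ⟫ - f ξ ≤ ⟪y, η⟫ - f η

theorem ofReal_inner_sub_le_fenchelConjugate (f : E → ℝ) (y η : E) :
    ENNReal.ofReal (⟪y, η⟫ - f η) ≤ fenchelConjugate f y :=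
  le_iSup (fun η ↦ ENNReal.ofReal (⟪y, η⟫ - f η)) η

theorem inner_sub_le_toReal_fenchelConjugate (hy : fenchelConjugate f y ≠ ⊤) (η : E) :
    ⟪y, η⟫ - f η ≤ (fenchelConjugate f y).toReal :=
  (ENNReal.ofReal_le_iff_le_toReal hy).1 (ofReal_inner_sub_le_fenchelConjugate f y η)

theorem measurable_fenchelConjugate [MeasurableSpace E] [OpensMeasurableSpace E] (f : E → ℝ) :
    Measurable (fenchelConjugate f) :=
  (lowerSemicontinuous_iSup fun η ↦ Continuous.lowerSemicontinuous
    (ENNReal.continuous_ofReal.comp (by fun_prop))).measurable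

theorem IsSubgradientAt.fenchelConjugate_eq (h : IsSubgradientAt f y η) :
    fenchelConjugate f y = ENNReal.ofReal (⟪y, η⟫ - f η) :=
  le_antisymm (iSup_le fun ξ ↦ ENNReal.ofReal_le_ofReal (h ξ))
    (ofReal_inner_sub_le_fenchelConjugate f y η)

theorem IsSubgradientAt.toReal_fenchelConjugate (h : IsSubgradientAt f y η) (hf : f 0 ≤ 0) :
    (fenchelConjugate f y).toReal = ⟪y, η⟫ - f η := by
  have hzero := h 0
  rw [inner_zero_right] at hzero
  rw [h.fenchelConjugate_eq, ENNReal.toReal_ofReal (by linarith)]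

theorem IsSubgradientAt.of_toReal_fenchelConjugate (hy : fenchelConjugate f y ≠ ⊤)
    (h : ⟪y, η⟫ - f η = (fenchelConjugate f y).toReal) : IsSubgradientAt f y η := fun ξ ↦
  (inner_sub_le_toReal_fenchelConjugate hy ξ).trans_eq h.symm

theorem IsSubgradientAt.innerSL_eq_fderiv (h : IsSubgradientAt f y η)
    (hf : DifferentiableAt ℝ f η) : innerSL ℝ y = fderiv ℝ f η := by
  have hmax : IsLocalMax (fun ξ ↦ ⟪y, ξ⟫ - f ξ) η := Eventually.of_forall h
  exact sub_eq_zero.1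
    (hmax.hasFDerivAt_eq_zero ((innerSL ℝ y).hasFDerivAt.sub hf.hasFDerivAt))

theorem IsSubgradientAt.unique {x : E} (hx : IsSubgradientAt f x η) (hy : IsSubgradientAt f y η)
    (hf : DifferentiableAt ℝ f η) : x = y :=
  ext_inner_right ℝ fun ξ ↦
    DFunLike.congr_fun ((hx.innerSL_eq_fderiv hf).trans (hy.innerSL_eq_fderiv hf).symm) ξ

theorem exists_norm_eq_one_norm_smul_eq [Nontrivial E] (y : E) :
    ∃ u : E, ‖u‖ = 1 ∧ ‖y‖ • u = y := by
  rcases eq_or_ne y 0 with rfl | hy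
  · obtain ⟨u, hu⟩ := exists_norm_eq E zero_le_one
    exact ⟨u, hu, by simp⟩
  · exact ⟨‖y‖⁻¹ • y, by simp [norm_smul, hy], by simp [smul_smul, hy]⟩

theorem fenchelConjugate_of_radial [Nontrivial E] {h : ℝ → ℝ}
    (hf : ∀ u, ‖u‖ = 1 → ∀ s : ℝ, f (s • u) = h s) (y : E) :
    fenchelConjugate f y = fenchelConjugate h ‖y‖ := by
  refine le_antisymm (iSup_le fun η ↦ ?_) (iSup_le fun s ↦ ?_)
  · obtain ⟨u, hu, hη⟩ := exists_norm_eq_one_norm_smul_eq η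
    have hfη : f η = h ‖η‖ := by rw [← hf u hu, hη]
    refine le_trans (ENNReal.ofReal_le_ofReal ?_)
      (ofReal_inner_sub_le_fenchelConjugate h ‖y‖ ‖η‖)
    rw [hfη]
    gcongr
    exact (real_inner_le_norm y η).trans_eq (mul_comm _ _)
  · obtain ⟨u, hu, hy⟩ := exists_norm_eq_one_norm_smul_eq y
    have hinner : ⟪y, s • u⟫ = ⟪‖y‖, s⟫ := by
      nth_rw 1 [← hy]
      simp [inner_smul_left, inner_smul_right, hu]
    rw [← hinner, ← hf u hu]
    exact ofReal_inner_sub_le_fenchelConjugate f y (s • u)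

section Jensen

variable [CompleteSpace E] {Ω : Type*} [MeasurableSpace Ω] {P : Measure Ω}
  [IsProbabilityMeasure P] {X : Ω → E}

theorem integral_inner_sub_const (hX : Integrable X P) (η : E) (c : ℝ) :
    ∫ ω, (⟪X ω, η⟫ - c) ∂P = ⟪∫ ω, X ω ∂P, η⟫ - c := by
  rw [integral_sub (hX.inner_const η) (integrable_const c)]
  simp only [real_inner_comm η, integral_inner hX, integral_const, probReal_univ, one_smul]

theorem fenchelConjugate_integral_le_lintegral (f : E → ℝ) (hX : Integrable X P) :
    fenchelConjugate f (∫ ω, X ω ∂P) ≤ ∫⁻ ω, fenchelConjugate f (X ω) ∂P := by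
  refine iSup_le fun η ↦ ?_
  have hint : Integrable (fun ω ↦ ⟪X ω, η⟫ - f η) P :=
    (hX.inner_const η).sub (integrable_const _)
  calc ENNReal.ofReal (⟪∫ ω, X ω ∂P, η⟫ - f η)
      = ENNReal.ofReal (∫ ω, (⟪X ω, η⟫ - f η) ∂P) := by rw [integral_inner_sub_const hX]
    _ ≤ ENNReal.ofReal (∫ ω, max (⟪X ω, η⟫ - f η) 0 ∂P) :=
        ENNReal.ofReal_le_ofReal (integral_mono hint hint.pos_part fun _ ↦ le_max_left _ _)
    _ = ∫⁻ ω, ENNReal.ofReal (⟪X ω, η⟫ - f η) ∂P := by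
        rw [ofReal_integral_eq_lintegral_ofReal hint.pos_part
          (Eventually.of_forall fun _ ↦ le_max_right _ _)]
        simp only [ENNReal.ofReal_max, ENNReal.ofReal_zero, zero_le, max_eq_left]
    _ ≤ ∫⁻ ω, fenchelConjugate f (X ω) ∂P :=
        lintegral_mono fun ω ↦ ofReal_inner_sub_le_fenchelConjugate f (X ω) η

variable [MeasurableSpace E] [BorelSpace E]

theorem lintegral_fenchelConjugate_eq_iff (hf₀ : f 0 ≤ 0) (hf : DifferentiableAt ℝ f η)
    (hX : Integrable X P) (hη : IsSubgradientAt f (∫ ω, X ω ∂P) η)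
    (hfin : ∫⁻ ω, fenchelConjugate f (X ω) ∂P ≠ ⊤) :
    ∫⁻ ω, fenchelConjugate f (X ω) ∂P = fenchelConjugate f (∫ ω, X ω ∂P) ↔
      ∀ᵐ ω ∂P, X ω = ∫ ω, X ω ∂P := by
  refine ⟨fun heq ↦ ?_, fun hconst ↦ ?_⟩
  · have hmeas : AEMeasurable (fun ω ↦ fenchelConjugate f (X ω)) P :=
      (measurable_fenchelConjugate f).comp_aemeasurable hX.aemeasurable
    have hlt : ∀ᵐ ω ∂P, fenchelConjugate f (X ω) < ⊤ := ae_lt_top' hmeas hfin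
    have hle : (fun ω ↦ ⟪X ω, η⟫ - f η) ≤ᵐ[P] fun ω ↦ (fenchelConjugate f (X ω)).toReal :=
      hlt.mono fun ω hω ↦ inner_sub_le_toReal_fenchelConjugate hω.ne η
    have hint_eq : ∫ ω, (⟪X ω, η⟫ - f η) ∂P = ∫ ω, (fenchelConjugate f (X ω)).toReal ∂P := by
      rw [integral_inner_sub_const hX, integral_toReal hmeas hlt, heq,
        hη.toReal_fenchelConjugate hf₀]
    have hae := (integral_eq_iff_of_ae_le ((hX.inner_const η).sub (integrable_const _))
      (integrable_toReal_of_lintegral_ne_top hmeas hfin) hle).1 hint_eq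
    filter_upwards [hae, hlt] with ω hω hωlt
    exact (IsSubgradientAt.of_toReal_fenchelConjugate hωlt.ne hω).unique hη hf
  · rw [lintegral_congr_ae (hconst.mono fun ω hω ↦ congrArg (fenchelConjugate f) hω)]
    simp

end Jensen

end FenchelConjugate

section CumulantGeneratingFunction

open ProbabilityTheory hiding uniformOn

variable {Ω : Type*} [MeasurableSpace Ω] {P : Measure Ω} {X : Ω → ℝ} {m : ℝ}

theorem differentiable_cgf (hX : ∀ t, Integrable (fun ω ↦ Real.exp (t * X ω)) P) :
    Differentiable ℝ (cgf X P) := fun t ↦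
  (analyticAt_cgf (by simp [eq_univ_of_forall (s := integrableExpSet X P) hX])).differentiableAt

theorem tendsto_mul_sub_cgf_atTop_atTop [IsProbabilityMeasure P] (hX : AEMeasurable X P)
    (hm : ∀ᵐ ω ∂P, X ω < m) : Tendsto (fun t ↦ t * m - cgf X P t) atTop atTop := by
  have hlim : Tendsto (fun t : ℝ ↦ ∫ ω, Real.exp (t * (X ω - m)) ∂P) atTop (𝓝 0) := by
    rw [← integral_zero Ω ℝ (μ := P)]
    refine tendsto_integral_filter_of_dominated_convergence (fun _ ↦ 1)
      (Eventually.of_forall fun t ↦ aemeasurable_exp_mul t (hX.sub_const m)) ?_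
      (integrable_const _) ?_
    · filter_upwards [eventually_ge_atTop 0] with t ht
      filter_upwards [hm] with ω hω
      rw [Real.norm_eq_abs, Real.abs_exp, Real.exp_le_one_iff]
      exact mul_nonpos_of_nonneg_of_nonpos ht (sub_nonpos.2 hω.le)
    · filter_upwards [hm] with ω hω
      exact Real.tendsto_exp_atBot.comp (tendsto_id.atTop_mul_const_of_neg (sub_neg.2 hω))
  have hexp : (fun t : ℝ ↦ ∫ ω, Real.exp (t * (X ω - m)) ∂P) =ᶠ[atTop]
      fun t ↦ Real.exp (-(t * m - cgf X P t)) := by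
    filter_upwards [eventually_ge_atTop 0] with t ht
    have hint := integrable_exp_mul_of_le t m ht hX (hm.mono fun _ ↦ le_of_lt)
    rw [neg_sub, Real.exp_sub, exp_cgf hint, mgf, ← integral_div]
    simp only [mul_sub, Real.exp_sub]
  simpa only [Function.comp_def, neg_neg] using
    tendsto_neg_atBot_atTop.comp (Real.tendsto_exp_comp_nhds_zero.1 (hlim.congr' hexp))

theorem lt_of_fenchelConjugate_cgf_ne_top [IsProbabilityMeasure P] (hX : AEMeasurable X P)
    {R : ℝ} (hR : ∀ᵐ ω ∂P, X ω < R) (hm : fenchelConjugate (cgf X P) m ≠ ⊤) : m < R := by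
  by_contra! hRm
  have hlim := tendsto_mul_sub_cgf_atTop_atTop hX (hR.mono fun _ hω ↦ hω.trans_le hRm)
  exact hm (top_le_iff.1 (le_of_tendsto (ENNReal.tendsto_ofReal_atTop.comp hlim)
    (Eventually.of_forall (ofReal_inner_sub_le_fenchelConjugate (cgf X P) m))))

theorem tendsto_mul_sub_cgf_atTop_atBot [IsFiniteMeasure P]
    (hX : ∀ t, Integrable (fun ω ↦ Real.exp (t * X ω)) P) (hm : P {ω | m < X ω} ≠ 0) :
    Tendsto (fun t ↦ t * m - cgf X P t) atTop atBot := by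
  obtain ⟨r, hmr, hr⟩ : ∃ r, m < r ∧ P {ω | r ≤ X ω} ≠ 0 := by
    by_contra! h
    exact hm (by simpa [ae_iff] using (ae_le_const_iff_forall_gt_measure_zero X m).2 h)
  have hpos : 0 < P.real {ω | r ≤ X ω} := ENNReal.toReal_pos hr (measure_ne_top _ _)
  have hchernoff : ∀ᶠ t in atTop,
      t * m - cgf X P t ≤ -Real.log (P.real {ω | r ≤ X ω}) + t * (m - r) := by
    filter_upwards [eventually_ge_atTop 0] with t ht
    have h := (Real.log_le_iff_le_exp hpos).2 (measure_ge_le_exp_cgf r ht (hX t))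
    linarith
  exact tendsto_atBot_mono' _ hchernoff (tendsto_atBot_add_const_left _ _
    (tendsto_id.atTop_mul_const_of_neg (sub_neg.2 hmr)))

theorem tendsto_mul_sub_cgf_atBot_atBot [IsFiniteMeasure P]
    (hX : ∀ t, Integrable (fun ω ↦ Real.exp (t * X ω)) P) (hm : P {ω | X ω < m} ≠ 0) :
    Tendsto (fun t ↦ t * m - cgf X P t) atBot atBot := by
  have h := tendsto_mul_sub_cgf_atTop_atBot (P := P) (X := -X) (m := -m)
    (fun t ↦ by simpa using hX (-t)) (by simpa using hm)
  simpa [Function.comp_def, cgf_neg] using h.comp tendsto_neg_atBot_atTop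

theorem exists_isSubgradientAt_cgf [IsFiniteMeasure P]
    (hX : ∀ t, Integrable (fun ω ↦ Real.exp (t * X ω)) P)
    (hlt : P {ω | X ω < m} ≠ 0) (hgt : P {ω | m < X ω} ≠ 0) :
    ∃ t, IsSubgradientAt (cgf X P) m t := by
  refine Continuous.exists_forall_ge
    ((continuous_const.inner continuous_id).sub (differentiable_cgf hX).continuous) ?_
  rw [cocompact_eq_atBot_atTop]
  exact (tendsto_mul_sub_cgf_atBot_atBot hX hlt).sup (tendsto_mul_sub_cgf_atTop_atBot hX hgt)

end CumulantGeneratingFunction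

section Isotropic

open ProbabilityTheory hiding uniformOn

variable {E : Type*} [NormedAddCommGroup E] [InnerProductSpace ℝ E]

theorem exists_linearIsometryEquiv_apply_eq {η ξ : E} (h : ‖η‖ = ‖ξ‖) :
    ∃ A : E ≃ₗᵢ[ℝ] E, A η = ξ :=
  ⟨_, Submodule.reflection_sub h⟩

variable [MeasurableSpace E] {μ : Measure E} {u : E} {R : ℝ}

/-- The logarithmic Laplace transform of `μ`, i.e. the cumulant generating function of a random
vector with law `μ`. -/
def logLaplace (μ : Measure E) (η : E) : ℝ :=
  Real.log (∫ x, Real.exp ⟪x, η⟫ ∂μ)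

/-- A measure on an inner product space is isotropic if all linear isometries preserve it. -/
def IsIsotropic (μ : Measure E) : Prop :=
  ∀ A : E ≃ₗᵢ[ℝ] E, MeasurePreserving A μ μ

theorem logLaplace_smul (μ : Measure E) (s : ℝ) (u : E) :
    logLaplace μ (s • u) = cgf (fun x ↦ ⟪x, u⟫) μ s := by
  simp only [logLaplace, cgf, mgf, inner_smul_right]

theorem ae_abs_inner_lt (hR : ∀ᵐ x ∂μ, ‖x‖ < R) (hu : ‖u‖ = 1) : ∀ᵐ x ∂μ, |⟪x, u⟫| < R := by
  filter_upwards [hR] with x hx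
  exact (by simpa [hu] using abs_real_inner_le_norm x u : |⟪x, u⟫| ≤ ‖x‖).trans_lt hx

variable [BorelSpace E]

theorem IsIsotropic.logLaplace_eq_of_norm_eq (hμ : IsIsotropic μ) {η ξ : E} (h : ‖η‖ = ‖ξ‖) :
    logLaplace μ η = logLaplace μ ξ := by
  obtain ⟨A, rfl⟩ := exists_linearIsometryEquiv_apply_eq h
  have hchange := (hμ A).integral_comp A.toHomeomorph.measurableEmbedding
    fun x ↦ Real.exp ⟪x, A η⟫
  simp only [LinearIsometryEquiv.inner_map_map] at hchange
  rw [logLaplace, logLaplace, hchange]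

theorem IsIsotropic.fenchelConjugate_logLaplace (hμ : IsIsotropic μ) (hu : ‖u‖ = 1) (y : E) :
    fenchelConjugate (logLaplace μ) y = fenchelConjugate (cgf (fun x ↦ ⟪x, u⟫) μ) ‖y‖ := by
  have : Nontrivial E := ⟨u, 0, norm_ne_zero_iff.1 (by simp [hu])⟩
  refine fenchelConjugate_of_radial (fun v hv s ↦ ?_) y
  rw [← logLaplace_smul]
  exact hμ.logLaplace_eq_of_norm_eq (by simp [norm_smul, hu, hv])

theorem IsIsotropic.measure_lt_inner_eq_of_norm_eq (hμ : IsIsotropic μ) {v : E}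
    (h : ‖u‖ = ‖v‖) (r : ℝ) : μ {x | r < ⟪x, u⟫} = μ {x | r < ⟪x, v⟫} := by
  obtain ⟨A, rfl⟩ := exists_linearIsometryEquiv_apply_eq h
  rw [← (hμ A).measure_preimage_emb A.toHomeomorph.measurableEmbedding
    {x | r < ⟪x, A u⟫}]
  simp

theorem IsIsotropic.measure_lt_inner_ne_zero [SecondCountableTopology E] (hμ : IsIsotropic μ)
    (hu : ‖u‖ = 1) {r : ℝ} (hr : μ {x | r < ‖x‖} ≠ 0) : μ {x | r < ⟪x, u⟫} ≠ 0 := by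
  have : Nontrivial E := ⟨u, 0, norm_ne_zero_iff.1 (by simp [hu])⟩
  have : Nonempty (Metric.sphere (0 : E) 1) := ⟨u, by simpa using hu⟩
  let v : ℕ → Metric.sphere (0 : E) 1 := TopologicalSpace.denseSeq _
  have hcover : {x : E | r < ‖x‖} ⊆ ⋃ n, {x | r < ⟪x, (v n : E)⟫} := fun x hx ↦ by
    obtain ⟨e, he, hxe⟩ := exists_norm_eq_one_norm_smul_eq x
    have hopen : IsOpen {w : Metric.sphere (0 : E) 1 | r < ⟪x, (w : E)⟫} :=
      isOpen_lt continuous_const (by fun_prop)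
    have hmem : r < ⟪x, e⟫ := by
      rw [← hxe, real_inner_smul_left, real_inner_self_eq_norm_sq, he]
      simpa using hx
    obtain ⟨n, hn⟩ := (TopologicalSpace.denseRange_denseSeq _).exists_mem_open hopen
      ⟨⟨e, by simpa using he⟩, hmem⟩
    exact mem_iUnion.2 ⟨n, hn⟩
  intro hzero
  refine hr (measure_mono_null hcover (measure_iUnion_null fun n ↦ ?_))
  rwa [← hμ.measure_lt_inner_eq_of_norm_eq (hu.trans (norm_eq_of_mem_sphere (v n)).symm)]

theorem integrable_exp_mul_inner [IsFiniteMeasure μ] (hR : ∀ᵐ x ∂μ, ‖x‖ < R) (hu : ‖u‖ = 1)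
    (t : ℝ) : Integrable (fun x ↦ Real.exp (t * ⟪x, u⟫)) μ := by
  refine integrable_exp_mul_of_mem_Icc (a := -R) (b := R) (by fun_prop) ?_
  exact (ae_abs_inner_lt hR hu).mono fun x hx ↦ abs_le.1 hx.le

theorem IsIsotropic.exists_isSubgradientAt_cgf_inner [SecondCountableTopology E] [IsFiniteMeasure μ]
    (hμ : IsIsotropic μ) (hR : ∀ᵐ x ∂μ, ‖x‖ < R) (hμR : ∀ r < R, μ {x | r < ‖x‖} ≠ 0)
    (hu : ‖u‖ = 1) {m : ℝ} (hm : |m| < R) :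
    ∃ t, IsSubgradientAt (cgf (fun x ↦ ⟪x, u⟫) μ) m t := by
  refine exists_isSubgradientAt_cgf (integrable_exp_mul_inner hR hu) ?_
    (hμ.measure_lt_inner_ne_zero hu (hμR m (lt_of_abs_lt hm)))
  simpa using hμ.measure_lt_inner_ne_zero (u := -u) (by simpa using hu)
    (hμR (-m) ((neg_le_abs m).trans_lt hm))

theorem statement12_general [CompleteSpace E] [Nontrivial E] [SecondCountableTopology E]
    [IsProbabilityMeasure μ] (hμ : IsIsotropic μ) (hR : ∀ᵐ x ∂μ, ‖x‖ < R)
    (hμR : ∀ r < R, μ {x | r < ‖x‖} ≠ 0) {φ g : ℝ → E} (hg : IntegrableOn g (Icc 0 1))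
    (hφ : ∀ t ∈ Icc (0 : ℝ) 1, φ t = φ 0 + ∫ s in (0 : ℝ)..t, g s)
    (hfin : ∫⁻ t in Icc (0 : ℝ) 1, fenchelConjugate (logLaplace μ) (g t) < ⊤) {w : E}
    (hw : ‖w‖ = (eVariationOn φ (Icc 0 1)).toReal) :
    fenchelConjugate (logLaplace μ) w ≤
        ∫⁻ t in Icc (0 : ℝ) 1, fenchelConjugate (logLaplace μ) (g t) ∧
      (∫⁻ t in Icc (0 : ℝ) 1, fenchelConjugate (logLaplace μ) (g t) =
          fenchelConjugate (logLaplace μ) w ↔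
        ∀ᵐ t ∂volume.restrict (Icc (0 : ℝ) 1), ‖g t‖ = (eVariationOn φ (Icc 0 1)).toReal) := by
  obtain ⟨u, hu⟩ := exists_norm_eq E zero_le_one
  have : IsProbabilityMeasure (volume.restrict (Icc (0 : ℝ) 1)) := ⟨by simp⟩
  have hlength : ‖w‖ = ∫ t in Icc (0 : ℝ) 1, ‖g t‖ := by
    rw [hw, toReal_eVariationOn_eq_integral_norm zero_le_one
      ((intervalIntegrable_iff_integrableOn_Icc_of_le zero_le_one).2 hg) hφ,
      intervalIntegral.integral_of_le zero_le_one, integral_Icc_eq_integral_Ioc]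
  rw [← hw]
  simp only [hμ.fenchelConjugate_logLaplace hu] at hfin ⊢
  have hjensen := fenchelConjugate_integral_le_lintegral (cgf (fun x ↦ ⟪x, u⟫) μ) hg.norm
  rw [← hlength] at hjensen
  have hwR : ‖w‖ < R := lt_of_fenchelConjugate_cgf_ne_top (by fun_prop)
    ((ae_abs_inner_lt hR hu).mono fun _ ↦ lt_of_abs_lt) (hjensen.trans_lt hfin).ne
  obtain ⟨t, ht⟩ := hμ.exists_isSubgradientAt_cgf_inner hR hμR hu (m := ‖w‖) (by simpa using hwR)
  refine ⟨hjensen, ?_⟩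
  rw [hlength] at ht ⊢
  exact lintegral_fenchelConjugate_eq_iff cgf_zero.le
    (differentiable_cgf (integrable_exp_mul_inner hR hu) t) hg.norm ht hfin.ne

end Isotropic

section UniformOnBall

open ProbabilityTheory hiding uniformOn

variable {E : Type*} [NormedAddCommGroup E] [InnerProductSpace ℝ E] [FiniteDimensional ℝ E]
  [MeasurableSpace E] [BorelSpace E] {R : ℝ}

theorem uniformOn_eq_cond {α : Type*} [MeasureSpace α] (A : Set α) :
    uniformOn A = volume[|A] :=
  rfl

theorem isProbabilityMeasure_uniformOn_ball (hR : 0 < R) :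
    IsProbabilityMeasure (uniformOn (Metric.ball (0 : E) R)) :=
  cond_isProbabilityMeasure_of_finite (Metric.measure_ball_pos _ _ hR).ne' measure_ball_lt_top.ne

theorem isIsotropic_uniformOn_ball : IsIsotropic (uniformOn (Metric.ball (0 : E) R)) := fun A ↦ by
  have hball : A ⁻¹' Metric.ball (0 : E) R = Metric.ball 0 R := by ext x; simp
  have h := A.measurePreserving.restrict_preimage (s := Metric.ball (0 : E) R) measurableSet_ball
  rw [hball] at h
  exact h.smul_measure _

theorem ae_norm_lt_uniformOn_ball : ∀ᵐ x ∂uniformOn (Metric.ball (0 : E) R), ‖x‖ < R :=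
  ae_cond_of_forall_mem measurableSet_ball fun _ ↦ mem_ball_zero_iff.1

theorem uniformOn_ball_lt_norm_ne_zero [Nontrivial E] (hR : 0 < R) {r : ℝ} (hr : r < R) :
    uniformOn (Metric.ball (0 : E) R) {x | r < ‖x‖} ≠ 0 := by
  obtain ⟨c, hc, hcR⟩ := exists_between (max_lt hr hR)
  obtain ⟨x, hx⟩ := exists_norm_eq E (max_lt_iff.1 hc).2.le
  have hopen : IsOpen (Metric.ball (0 : E) R ∩ {x | r < ‖x‖}) :=
    Metric.isOpen_ball.inter (isOpen_lt continuous_const continuous_norm)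
  have hmem : x ∈ Metric.ball (0 : E) R ∩ {x | r < ‖x‖} :=
    ⟨by simpa [hx] using hcR, by simpa [hx] using (max_lt_iff.1 hc).1⟩
  rw [uniformOn_eq_cond, cond_apply measurableSet_ball]
  exact mul_ne_zero (ENNReal.inv_ne_zero.2 measure_ball_lt_top.ne)
    (hopen.measure_pos _ ⟨x, hmem⟩).ne'

theorem lambdaStar_eq_fenchelConjugate (R : ℝ) :
    lambdaStar R = fenchelConjugate (logLaplace (uniformOn (Metric.ball (0 : E2) R))) :=
  rfl

end UniformOnBall

/-- Jensen's inequality for the rate: if `φ` is absolutely continuous with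
derivative `g`, finite rate, and `w` is any vector with `‖w‖ = L(φ)`, then
`∫₀¹ Λ*(g(t)) dt ≥ Λ*(w)`, with equality iff `φ` has constant speed `‖g(t)‖ = L(φ)` a.e. -/
theorem statement12 (R : ℝ) (hR : 0 < R) (φ g : ℝ → E2)
    (hint : IntegrableOn g (Set.Icc 0 1) volume)
    (hAC : ∀ t ∈ Set.Icc (0:ℝ) 1, φ t = φ 0 + ∫ s in (0:ℝ)..t, g s)
    (hfin : (∫⁻ t in Set.Icc (0:ℝ) 1, lambdaStar R (g t)) < ⊤)
    (w : E2) (hw : ‖w‖ = (eVariationOn φ (Set.Icc 0 1)).toReal) :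
    lambdaStar R w ≤ (∫⁻ t in Set.Icc (0:ℝ) 1, lambdaStar R (g t)) ∧
    ((∫⁻ t in Set.Icc (0:ℝ) 1, lambdaStar R (g t)) = lambdaStar R w ↔
      ∀ᵐ t ∂(volume.restrict (Set.Icc (0:ℝ) 1)),
        ‖g t‖ = (eVariationOn φ (Set.Icc 0 1)).toReal) := by
  have := isProbabilityMeasure_uniformOn_ball (E := E2) hR
  rw [lambdaStar_eq_fenchelConjugate] at *
  exact statement12_general isIsotropic_uniformOn_ball ae_norm_lt_uniformOn_ball
    (fun _ ↦ uniformOn_ball_lt_norm_ne_zero hR) hint hAC hfin hw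
end
end
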